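/- Let A be a real number with 3 ≤ A < 2^(5/3). Then there is a unique x₀ in the half-open interval (0, 1] satisfying 2·x₀ + x₀^(−2) = A, and moreover this x₀ satisfies x₀ > A/4. -/

import Mathlib

/-!
The function `f x = 2 * x + x⁻²` is strictly decreasing on `(0, 1]` and takes there every value
`A ≥ 3`, so `A / 4 < x₀` amounts to `A = f x₀ < f (A / 4)`. As `f (A / 4) = A / 2 + 16 / A ^ 2`,
the latter reads `A ^ 3 < 32`, that is `A < 2 ^ (5 / 3)`.
-/

open Set

section MulAddZPowNeg

variable {c : ℝ} {m : ℤ}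

theorem continuousOn_mul_add_zpow_neg :
    ContinuousOn (fun x : ℝ ↦ c * x + x ^ (-m)) (Ioi 0) := fun x hx ↦
  ((continuousAt_const.mul continuousAt_id).add
    (continuousAt_zpow₀ x (-m) (.inl hx.ne'))).continuousWithinAt

theorem strictAntiOn_mul_add_zpow_neg (hm : 0 < m) (hc : c ≤ m) :
    StrictAntiOn (fun x : ℝ ↦ c * x + x ^ (-m)) (Ioc 0 1) := by
  refine strictAntiOn_of_deriv_neg (convex_Ioc 0 1)
    (continuousOn_mul_add_zpow_neg.mono Ioc_subset_Ioi_self) fun x hx ↦ ?_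
  obtain ⟨hx0, hx1⟩ : x ∈ Ioo 0 1 := by rwa [interior_Ioc] at hx
  have hderiv : HasDerivAt (fun x : ℝ ↦ c * x + x ^ (-m)) (c - m * x ^ (-m - 1)) x := by
    simpa [sub_eq_add_neg] using
      ((hasDerivAt_id x).const_mul c).fun_add (hasDerivAt_zpow (-m) x (.inl hx0.ne'))
  rw [hderiv.deriv, sub_neg]
  calc c ≤ m := hc
    _ < m * x ^ (-m - 1) :=
      lt_mul_of_one_lt_right (mod_cast hm) (one_lt_zpow_of_neg₀ hx0 hx1 (by lia))

theorem surjOn_mul_add_zpow_neg (hm : 0 < m) (hc : 0 ≤ c) :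
    SurjOn (fun x : ℝ ↦ c * x + x ^ (-m)) (Ioc 0 1) (Ici (c + 1)) := by
  intro A (hA : c + 1 ≤ A)
  have hA1 : 1 ≤ A := by linarith
  have hA0 : 0 < A⁻¹ := by positivity
  have hleft : A ≤ c * A⁻¹ + A⁻¹ ^ (-m) :=
    calc A = A ^ (1 : ℤ) := (zpow_one A).symm
      _ ≤ A ^ m := zpow_le_zpow_right₀ hA1 hm
      _ = A⁻¹ ^ (-m) := by rw [inv_zpow', neg_neg]
      _ ≤ c * A⁻¹ + A⁻¹ ^ (-m) := le_add_of_nonneg_left (by positivity)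
  have hright : c * 1 + 1 ^ (-m) ≤ A := by simpa using hA
  obtain ⟨x, ⟨hAx, hx1⟩, hx⟩ := intermediate_value_Icc' (inv_le_one_of_one_le₀ hA1)
    (continuousOn_mul_add_zpow_neg.mono fun _ hy ↦ hA0.trans_le hy.1) ⟨hright, hleft⟩
  exact ⟨x, ⟨hA0.trans_le hAx, hx1⟩, hx⟩

end MulAddZPowNeg

theorem lt_two_rpow_five_thirds_iff {A : ℝ} (hA : 0 ≤ A) :
    A < (2 : ℝ) ^ ((5 : ℝ) / 3) ↔ A ^ 3 < 32 := by
  have hroot : (2 : ℝ) ^ ((5 : ℝ) / 3) = 32 ^ (3 : ℝ)⁻¹ := by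
    rw [div_eq_mul_inv, Real.rpow_mul two_pos.le]
    norm_num
  rw [hroot, Real.lt_rpow_inv_iff_of_pos hA (by norm_num) three_pos]
  norm_cast

theorem lt_two_mul_quarter_add_zpow_neg_two_iff {A : ℝ} (hA : 0 < A) :
    A < 2 * (A / 4) + (A / 4) ^ (-2 : ℤ) ↔ A ^ 3 < 32 := by
  have hvalue : 2 * (A / 4) + (A / 4) ^ (-2 : ℤ) - A = (32 - A ^ 3) / (2 * A ^ 2) := by
    rw [zpow_neg, zpow_ofNat]
    field_simp
    ring
  rw [← sub_pos, hvalue, div_pos_iff_of_pos_right (by positivity), sub_pos]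

/-- For `3 ≤ A < 2^(5/3)` there is a unique `x₀ ∈ (0, 1]` with
`2 x₀ + x₀⁻² = A`, and moreover this `x₀` satisfies `x₀ > A / 4`. -/
theorem unique_root_gt_quarter_trace
    (A : ℝ) (hA3 : 3 ≤ A) (hA : A < (2 : ℝ) ^ ((5 : ℝ) / 3)) :
    ∃ x₀ : ℝ, (x₀ ∈ Set.Ioc (0 : ℝ) 1 ∧ 2 * x₀ + x₀ ^ (-2 : ℤ) = A) ∧
      A / 4 < x₀ ∧
      ∀ y : ℝ, y ∈ Set.Ioc (0 : ℝ) 1 → 2 * y + y ^ (-2 : ℤ) = A → y = x₀ := by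
  have hA0 : 0 < A := by linarith
  have hcube : A ^ 3 < 32 := (lt_two_rpow_five_thirds_iff hA0.le).1 hA
  have hA4 : A < 4 := lt_of_pow_lt_pow_left₀ 3 (by norm_num) (by linarith)
  have hanti : StrictAntiOn (fun x : ℝ ↦ 2 * x + x ^ (-2 : ℤ)) (Ioc 0 1) :=
    strictAntiOn_mul_add_zpow_neg two_pos (by norm_num)
  obtain ⟨x₀, hx₀, hroot : 2 * x₀ + x₀ ^ (-2 : ℤ) = A⟩ :=
    surjOn_mul_add_zpow_neg two_pos two_pos.le (show A ∈ Ici (2 + 1) by rw [mem_Ici]; linarith)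
  have hquarter : A / 4 ∈ Ioc 0 1 := ⟨by linarith, by linarith⟩
  refine ⟨x₀, ⟨hx₀, hroot⟩, (hanti.lt_iff_gt hx₀ hquarter).1 ?_, fun y hy hyA ↦
    hanti.injOn hy hx₀ (hyA.trans hroot.symm)⟩
  calc 2 * x₀ + x₀ ^ (-2 : ℤ) = A := hroot
    _ < 2 * (A / 4) + (A / 4) ^ (-2 : ℤ) :=
      (lt_two_mul_quarter_add_zpow_neg_two_iff hA0).2 hcube
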